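/- Let T > 0, let F assign continuously to each t ∈ [0,T] real values F(t)(i,j) at interior points, and let u₀ be a grid function vanishing on the boundary. Let y₀ : [0,T] → (grid functions vanishing on the boundary) be the C¹ solution of the reference semi-discrete heat equation ∂_t y₀(t)(i,j) + (A y₀(t))(i,j) = F(t)(i,j) at interior points, y₀(0) = u₀, and assume the discrete non-degeneracy condition: (1/2) y₀(t)(2,j) − 2 y₀(t)(1,j) ≠ 0 for every t ∈ [0,T] and every j with 1 ≤ j ≤ N−1. Then the semi-discrete heat equation is locally exactly controllable by the shape of the domain: there exist ε ∈ (0,1/2) and δ > 0 such that for every family of interior values Z with max over interior (i,j) of |Z(i,j) − y₀(T)(i,j)| < δ, there exist a continuous λ : [0,T] → ℝ^{N−1} with sup_{t,j} |λ_j(t)| ≤ ε and a C¹ map u : [0,T] → (grid functions vanishing on the boundary) such that ∂_t u(t)(i,j) + (A(λ(t)) u(t))(i,j) = F(t)(i,j) at interior points, u(0) = u₀, and u(T)(i,j) = Z(i,j) at every interior point. -/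

import Mathlib

open Set

/-- The point `(i,j)` is an interior node of the grid `Ω_h`. -/
def isInterior (M N : ℤ) (i j : ℤ) : Prop :=
  1 ≤ i ∧ i ≤ M - 1 ∧ 1 ≤ j ∧ j ≤ N - 1

/-- The point `(i,j)` belongs to the grid `Ω_h`. -/
def onGrid (M N : ℤ) (i j : ℤ) : Prop :=
  0 ≤ i ∧ i ≤ M ∧ 0 ≤ j ∧ j ≤ N

/-- The point `(i,j)` belongs to the discrete boundary `Γ⁰` of `Ω_h`. -/
def onBoundary (M N : ℤ) (i j : ℤ) : Prop :=
  onGrid M N i j ∧ ¬ isInterior M N i j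

/-- The discrete Dirichlet Laplacian `(A X)(i,j)`. -/
noncomputable def discLap (h : ℝ) (X : ℤ → ℤ → ℝ) (i j : ℤ) : ℝ :=
  (1 / h ^ 2) * (4 * X i j - X (i + 1) j - X (i - 1) j - X i (j + 1) - X i (j - 1))

/-- The perturbed operator `A(λ)`: it agrees with the discrete Laplacian away from the
first layer `i = 1`, and is modified on the first layer according to the deformation `λ`. -/
noncomputable def pertOp (h : ℝ) (lam : ℤ → ℝ) (X : ℤ → ℤ → ℝ) (i j : ℤ) : ℝ :=
  if i = 1 then
    (1 / h ^ 2) * (2 * (1 + 1 / (1 + lam j)) * X 1 j - (2 / (2 + lam j)) * X 2 j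
      - X 1 (j + 1) - X 1 (j - 1))
  else discLap h X i j

/-!
To first order in `λ`, the operator `A(λ)` is the Dirichlet Laplacian with the fictitious boundary
data `λ_j (2 X(1,j) - X(2,j)/2)` on the edge `i = 0`, and the non-degeneracy condition says that the
coefficient of `λ_j` does not vanish along the reference solution. So every small Dirichlet control
on that edge is realized by a small deformation `λ`, the root of a quadratic equation, and it
suffices to control the heat equation, linearly, from the edge `i = 0`. That system is flat: the
equation in row `i` determines row `i - 1` from the rows `i`, `i + 1` and a time derivative, so that
row `M - 1` can be prescribed freely and generates the trajectory together with its control. Taking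
for row `M - 1` the one of the free solution with the desired final state, cut off smoothly near the
initial time, steers `0` to that state.
-/

open scoped ContDiff Topology

section EvalZeroExt

variable {ι E : Type*} [NormedAddCommGroup E] [NormedSpace ℝ E]

open Classical in
/-- Evaluation at `i` of the extension by zero to `ι` of a family indexed by `S`. It encodes the
homogeneous Dirichlet condition, both for rows and for columns of the grid. -/
noncomputable def evalZeroExt (E : Type*) [NormedAddCommGroup E] [NormedSpace ℝ E] (S : Set ι)
    (i : ι) : (S → E) →L[ℝ] E :=
  if hi : i ∈ S then ContinuousLinearMap.proj ⟨i, hi⟩ else 0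

theorem evalZeroExt_apply_of_mem {S : Set ι} {i : ι} (hi : i ∈ S) (x : S → E) :
    evalZeroExt E S i x = x ⟨i, hi⟩ := by
  simp [evalZeroExt, hi]

theorem evalZeroExt_of_notMem {S : Set ι} {i : ι} (hi : i ∉ S) : evalZeroExt E S i = 0 := by
  simp [evalZeroExt, hi]

theorem norm_evalZeroExt_apply_le {S : Set ι} [Fintype S] (i : ι) (x : S → E) :
    ‖evalZeroExt E S i x‖ ≤ ‖x‖ := by
  by_cases hi : i ∈ S
  · rw [evalZeroExt_apply_of_mem hi]
    exact norm_le_pi_norm x _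
  · simp [evalZeroExt_of_notMem hi]

end EvalZeroExt

section FlatSeq

variable {E : Type*} [NormedAddCommGroup E] [NormedSpace ℝ E] {c : ℝ} {L : E →L[ℝ] E} {φ ψ : ℝ → E}

/-- The trajectory of the chain `c x'_{k+1} = x_k + x_{k+2} - L x_{k+1}`, `x_0 = 0`, generated by
its flat output `x_1 = φ`. -/
noncomputable def flatSeq (c : ℝ) (L : E →L[ℝ] E) (φ : ℝ → E) : ℕ → ℝ → E
  | 0 => 0
  | 1 => φ
  | k + 2 => c • deriv (flatSeq c L φ (k + 1)) + (fun t ↦ L (flatSeq c L φ (k + 1) t)) -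
      flatSeq c L φ k

theorem contDiff_flatSeq (hφ : ContDiff ℝ ∞ φ) (k : ℕ) : ContDiff ℝ ∞ (flatSeq c L φ k) := by
  induction k using Nat.twoStepInduction with
  | zero => exact contDiff_const
  | one => exact hφ
  | more k ih ih' =>
    exact (((contDiff_infty_iff_deriv.1 ih').2.const_smul c).add (L.contDiff.comp ih')).sub ih

theorem flatSeq_eventuallyEq {t : ℝ} (hφψ : φ =ᶠ[𝓝 t] ψ) (k : ℕ) :
    flatSeq c L φ k =ᶠ[𝓝 t] flatSeq c L ψ k := by
  induction k using Nat.twoStepInduction with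
  | zero => rfl
  | one => exact hφψ
  | more k ih ih' => exact ((ih'.deriv.const_smul c).add (ih'.fun_comp L)).sub ih

theorem flatSeq_zero (k : ℕ) : flatSeq c L 0 k = 0 := by
  induction k using Nat.twoStepInduction with
  | zero => rfl
  | one => rfl
  | more k ih ih' => ext t; simp [flatSeq, ih, ih']

theorem flatSeq_eq_of_recurrence {x : ℕ → ℝ → E} {n : ℕ} (hzero : x 0 = 0)
    (hrec : ∀ k < n, x (k + 2) = c • deriv (x (k + 1)) + (fun t ↦ L (x (k + 1) t)) - x k) :
    ∀ k ≤ n + 1, flatSeq c L (x 1) k = x k := by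
  intro k
  induction k using Nat.twoStepInduction with
  | zero => exact fun _ ↦ hzero.symm
  | one => exact fun _ ↦ rfl
  | more k ih ih' =>
    intro hk
    rw [hrec k (by omega), flatSeq, ih (by omega), ih' (by omega)]

end FlatSeq

section ChainControl

variable {E : Type*} [NormedAddCommGroup E] [NormedSpace ℝ E] {c : ℝ}

/-- The generator `A` of the uncontrolled chain with rows `1, …, n` and zero rows `0` and `n + 1`:
the free evolution is `x' = -A x`. -/
noncomputable def chainGenerator (c : ℝ) (L : E →L[ℝ] E) (n : ℕ) :
    (Icc 1 n → E) →L[ℝ] (Icc 1 n → E) :=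
  .pi fun k ↦ c⁻¹ • (L ∘L evalZeroExt E _ k.1 - evalZeroExt E _ (k.1 - 1) -
    evalZeroExt E _ (k.1 + 1))

theorem smul_evalZeroExt_comp_chainGenerator (hc : c ≠ 0) (L : E →L[ℝ] E) {n k : ℕ} (hk : k < n) :
    c • (evalZeroExt E (Icc 1 n) (k + 1) ∘L chainGenerator c L n) =
      L ∘L evalZeroExt E _ (k + 1) - evalZeroExt E _ k - evalZeroExt E _ (k + 2) := by
  ext x
  have hmem : k + 1 ∈ Icc 1 n := ⟨by omega, hk⟩
  simp [evalZeroExt_apply_of_mem hmem, chainGenerator, hc]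

theorem hasDerivAt_exp_sub_smul {V : Type*} [NormedRing V] [NormedAlgebra ℝ V] [CompleteSpace V]
    (A : V) (t₁ t : ℝ) :
    HasDerivAt (fun s : ℝ ↦ NormedSpace.exp ((s - t₁) • A))
      (A * NormedSpace.exp ((t - t₁) • A)) t :=
  (hasDerivAt_exp_smul_const' (𝕂 := ℝ) A (t - t₁)).comp_sub_const t t₁

theorem contDiff_exp_sub_smul {V : Type*} [NormedRing V] [NormedAlgebra ℝ V] [CompleteSpace V]
    (A : V) (t₁ : ℝ) : ContDiff ℝ ∞ fun s : ℝ ↦ NormedSpace.exp ((s - t₁) • A) :=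
  have hexp : ContDiff ℝ ∞ (NormedSpace.exp : V → V) :=
    AnalyticOnNhd.contDiff fun x _ ↦ NormedSpace.exp_analytic (𝕂 := ℝ) x
  hexp.comp (by fun_prop)

theorem exists_free_flatSeq [CompleteSpace E] (hc : c ≠ 0) (L : E →L[ℝ] E) (n : ℕ) (t₁ : ℝ) :
    ∃ φ : ℝ → (Icc 1 n → E) →L[ℝ] E, ContDiff ℝ ∞ φ ∧
      ∀ k ≤ n + 1, flatSeq c (.compL ℝ _ E E L) φ k t₁ = evalZeroExt E (Icc 1 n) k := by
  set A := chainGenerator c L n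
  let x : ℕ → ℝ → (Icc 1 n → E) →L[ℝ] E := fun k t ↦
    evalZeroExt E _ k ∘L NormedSpace.exp ((t - t₁) • -A)
  have hderiv (k : ℕ) (t : ℝ) : HasDerivAt (x k)
      (evalZeroExt E _ k ∘L (-A * NormedSpace.exp ((t - t₁) • -A))) t := by
    simpa only [ContinuousLinearMap.zero_comp, zero_add] using
      (hasDerivAt_const t (evalZeroExt E (Icc 1 n) k)).clm_comp
        (hasDerivAt_exp_sub_smul (-A) t₁ t)
  have hzero : x 0 = 0 := by
    ext t : 1
    simp [x, evalZeroExt_of_notMem (show (0 : ℕ) ∉ Icc 1 n by simp)]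
  have hrec (k : ℕ) (hk : k < n) : x (k + 2) = c • deriv (x (k + 1)) +
      (fun t ↦ ContinuousLinearMap.compL ℝ _ E E L (x (k + 1) t)) - x k := by
    ext t v
    have hA := congr($(smul_evalZeroExt_comp_chainGenerator hc L hk)
      (NormedSpace.exp ((t - t₁) • -A) v))
    change x (k + 2) t v = c • deriv (x (k + 1)) t v + L (x (k + 1) t v) - x k t v
    rw [(hderiv (k + 1) t).deriv]
    simp only [x, A, ContinuousLinearMap.comp_apply, mul_apply_eq_comp,
      smul_apply, sub_apply, neg_apply, map_neg, smul_neg] at hA ⊢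
    rw [hA]
    abel
  refine ⟨x 1, ?_, fun k hk ↦ ?_⟩
  · exact contDiff_const.clm_comp (contDiff_exp_sub_smul (-A) t₁)
  · rw [flatSeq_eq_of_recurrence hzero hrec k hk]
    simp [x, ContinuousLinearMap.one_def]

theorem exists_flatSeq_control [CompleteSpace E] (hc : c ≠ 0) (L : E →L[ℝ] E) (n : ℕ) {t₀ t₁ : ℝ}
    (ht : t₀ ≠ t₁) :
    ∃ φ : ℝ → (Icc 1 n → E) →L[ℝ] E, ContDiff ℝ ∞ φ ∧
      (∀ k, flatSeq c (.compL ℝ _ E E L) φ k t₀ = 0) ∧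
      ∀ k ≤ n + 1, flatSeq c (.compL ℝ _ E E L) φ k t₁ = evalZeroExt E (Icc 1 n) k := by
  obtain ⟨ψ, hψ, hψ₁⟩ := exists_free_flatSeq hc L n t₁
  have hdist : 0 < dist t₀ t₁ := dist_pos.2 ht
  let χ : ContDiffBump t₁ := ⟨dist t₀ t₁ / 3, dist t₀ t₁ / 2, by positivity, by linarith⟩
  have hχ₀ : χ =ᶠ[𝓝 t₀] 0 := by
    rw [← notMem_tsupport_iff_eventuallyEq, χ.tsupport_eq, Metric.mem_closedBall, not_le]
    exact half_lt_self hdist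
  refine ⟨fun t ↦ χ t • ψ t, χ.contDiff.smul hψ, fun k ↦ ?_, fun k hk ↦ ?_⟩
  · have hφ₀ : (fun t ↦ χ t • ψ t) =ᶠ[𝓝 t₀] 0 := hχ₀.mono fun t ht ↦ by simp [ht]
    rw [(flatSeq_eventuallyEq hφ₀ k).eq_of_nhds, flatSeq_zero, Pi.zero_apply]
  · have hφ₁ : (fun t ↦ χ t • ψ t) =ᶠ[𝓝 t₁] ψ := χ.eventuallyEq_one.mono fun t ht ↦ by simp [ht]
    rw [(flatSeq_eventuallyEq hφ₁ k).eq_of_nhds, hψ₁ k hk]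

end ChainControl

section BoundaryControl

variable {M N : ℤ} {h : ℝ}

/-- `w` solves the free semi-discrete heat equation with zero Dirichlet data on the edges of the
grid other than `i = 0`; its values on the edge `i = 0` are a Dirichlet control. -/
structure IsBoundaryDriven (M N : ℤ) (h : ℝ) (w : ℝ → ℤ → ℤ → ℝ) : Prop where
  continuous : ∀ i j, Continuous fun t ↦ w t i j
  hasDerivAt : ∀ t i j, isInterior M N i j →
    HasDerivAt (fun s ↦ w s i j) (-discLap h (w t) i j) t
  eq_zero : ∀ t i j, onBoundary M N i j → i ≠ 0 → w t i j = 0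

/-- The part of `h² A` that acts inside one row. -/
noncomputable def rowOp (N : ℤ) : (Icc 1 (N - 1) → ℝ) →L[ℝ] (Icc 1 (N - 1) → ℝ) :=
  .pi fun j ↦ (4 : ℝ) • evalZeroExt ℝ _ j.1 - evalZeroExt ℝ _ (j.1 + 1) -
    evalZeroExt ℝ _ (j.1 - 1)

variable {V : Type*} [NormedAddCommGroup V] [NormedSpace ℝ V]
  {φ : ℝ → V →L[ℝ] (Icc 1 (N - 1) → ℝ)}

/-- The grid trajectory generated by the flat output `φ`, for the datum `v`. Row `i` is the
`(M - i)`-th term of the chain, so the recursion starts at the edge `i = M`. -/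
noncomputable def flatGrid (M : ℤ) (h : ℝ) (φ : ℝ → V →L[ℝ] (Icc 1 (N - 1) → ℝ)) (v : V) (t : ℝ)
    (i j : ℤ) : ℝ :=
  evalZeroExt ℝ (Icc 1 (N - 1)) j
    (flatSeq (h ^ 2) (.compL ℝ V _ _ (rowOp N)) φ (M - i).toNat t v)

theorem isBoundaryDriven_flatGrid (hh : h ≠ 0) (hφ : ContDiff ℝ ∞ φ) (v : V) :
    IsBoundaryDriven M N h (flatGrid M h φ v) where
  continuous i j := by
    have hcont := (contDiff_flatSeq (c := h ^ 2) (L := .compL ℝ V _ _ (rowOp N)) hφ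
      (M - i).toNat).continuous
    unfold flatGrid
    fun_prop
  hasDerivAt t i j hij := by
    set x := flatSeq (h ^ 2) (.compL ℝ V _ _ (rowOp N)) φ with hx
    obtain ⟨k, hk⟩ : ∃ k : ℕ, i = M - (k + 1) :=
      ⟨(M - i - 1).toNat, by unfold isInterior at hij; omega⟩
    have hmem : j ∈ Icc 1 (N - 1) := hij.2.2
    have hx' : HasDerivAt (x (k + 1)) (deriv (x (k + 1)) t) t :=
      ((contDiff_flatSeq hφ _).differentiable (by simp) t).hasDerivAt
    have hw := (evalZeroExt ℝ (Icc 1 (N - 1)) j).hasFDerivAt.comp_hasDerivAt t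
      (hx'.clm_apply (hasDerivAt_const t v))
    have hk₁ : (M - i).toNat = k + 1 := by omega
    have hk₀ : (M - (i + 1)).toNat = k := by omega
    have hk₂ : (M - (i - 1)).toNat = k + 2 := by omega
    have hrec : x (k + 2) t v = h ^ 2 • deriv (x (k + 1)) t v + rowOp N (x (k + 1) t v) - x k t v :=
      rfl
    have hrow (y) : evalZeroExt ℝ (Icc 1 (N - 1)) j (rowOp N y) =
        4 * evalZeroExt ℝ _ j y - evalZeroExt ℝ _ (j + 1) y - evalZeroExt ℝ _ (j - 1) y :=
      evalZeroExt_apply_of_mem hmem _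
    simp only [flatGrid, discLap, hk₁, hk₀, hk₂, ← hx, hrec, map_sub, map_add, map_smul, hrow]
    refine hw.congr_deriv ?_
    simp only [map_zero, add_zero, smul_eq_mul]
    field_simp
    ring
  eq_zero t i j hij hi := by
    by_cases hj : j ∈ Icc 1 (N - 1)
    · have hiM : (M - i).toNat = 0 := by
        simp only [onBoundary, onGrid, isInterior, mem_Icc] at hij hj
        omega
      simp [flatGrid, hiM, flatSeq]
    · simp [flatGrid, evalZeroExt_of_notMem hj]

theorem abs_flatGrid_le {C : ℝ} {v : V} {t : ℝ} {i j : ℤ}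
    (hC : ‖flatSeq (h ^ 2) (.compL ℝ V _ _ (rowOp N)) φ (M - i).toNat t‖ ≤ C) :
    |flatGrid M h φ v t i j| ≤ C * ‖v‖ :=
  (norm_evalZeroExt_apply_le j _).trans (ContinuousLinearMap.le_of_opNorm_le _ hC v)

theorem exists_isBoundaryDriven (M N : ℤ) (hh : h ≠ 0) {T : ℝ} (hT : 0 < T) :
    ∃ C, ∀ η ≥ 0, ∀ z : ℤ → ℤ → ℝ, (∀ i j, isInterior M N i j → |z i j| ≤ η) →
      ∃ w, IsBoundaryDriven M N h w ∧ w 0 = 0 ∧ (∀ i j, isInterior M N i j → w T i j = z i j) ∧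
        ∀ t ∈ Icc 0 T, ∀ i ≥ 0, ∀ j, |w t i j| ≤ C * η := by
  obtain ⟨φ, hφ, hφ₀, hφT⟩ :=
    exists_flatSeq_control (pow_ne_zero 2 hh) (rowOp N) (M - 1).toNat hT.ne
  have hcont : Continuous fun t (k : Fin (M.toNat + 1)) ↦
      flatSeq (h ^ 2) (.compL ℝ _ _ _ (rowOp N)) φ k t :=
    continuous_pi fun k ↦ (contDiff_flatSeq hφ k).continuous
  obtain ⟨C, hC⟩ :=
    (isCompact_Icc (a := 0) (b := T)).exists_bound_of_continuousOn hcont.continuousOn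
  refine ⟨C, fun η hη z hz ↦ ?_⟩
  let v : Icc 1 (M - 1).toNat → Icc 1 (N - 1) → ℝ := fun k j ↦ z (M - k) j
  have hv : ‖v‖ ≤ η := by
    refine (pi_norm_le_iff_of_nonneg hη).2 fun k ↦ (pi_norm_le_iff_of_nonneg hη).2 fun j ↦ hz _ _ ?_
    have hk := k.2
    have hj := j.2
    simp only [mem_Icc] at hk hj
    unfold isInterior
    omega
  refine ⟨flatGrid M h φ v, isBoundaryDriven_flatGrid hh hφ v, ?_, fun i j hij ↦ ?_,
    fun t ht i hi j ↦ ?_⟩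
  · ext i j
    simp [flatGrid, hφ₀]
  · have ⟨hi, hiM, _⟩ := hij
    have hj : j ∈ Icc 1 (N - 1) := hij.2.2
    have hk : (M - i).toNat ∈ Icc 1 (M - 1).toNat := by
      simp only [mem_Icc]
      omega
    rw [flatGrid, hφT _ (by omega), evalZeroExt_apply_of_mem hj, evalZeroExt_apply_of_mem hk]
    exact congrArg (z · j) (by dsimp only; omega)
  · have hC₀ : 0 ≤ C := (norm_nonneg _).trans (hC t ht)
    have hφC := (norm_le_pi_norm _ (⟨(M - i).toNat, by omega⟩ : Fin (M.toNat + 1))).trans (hC t ht)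
    exact (abs_flatGrid_le hφC).trans (by gcongr)

end BoundaryControl

section Deformation

/-- The root of `q x ^ 2 + x = p` that vanishes at `p = 0`, in the form that stays meaningful at
`q = 0`. -/
noncomputable def smallRoot (q p : ℝ) : ℝ := 2 * p / (1 + √(1 + 4 * q * p))

theorem smallRoot_spec {q p : ℝ} (hqp : 0 ≤ 1 + 4 * q * p) :
    q * smallRoot q p ^ 2 + smallRoot q p = p := by
  have hsq := Real.sq_sqrt hqp
  unfold smallRoot
  set s := √(1 + 4 * q * p)
  have hs : 1 + s ≠ 0 := by positivity
  field_simp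
  linear_combination -p * hsq

theorem continuous_smallRoot : Continuous fun x : ℝ × ℝ ↦ smallRoot x.1 x.2 := by
  unfold smallRoot
  exact Continuous.div (by fun_prop) (by fun_prop) fun x ↦ by positivity

/-- The Dirichlet data on the edge `i = 0` to which a deformation `l` of the first layer amounts
when `X(1,j) = a` and `X(2,j) = b`. -/
noncomputable def ghostValue (l a b : ℝ) : ℝ := l * (2 * a / (1 + l) - b / (2 + l))

theorem pertOp_eq_discLap_update (h : ℝ) {lam : ℤ → ℝ} {X : ℤ → ℤ → ℝ} {g : ℤ → ℝ} {i j : ℤ}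
    (hi : 1 ≤ i) (hlam : |lam j| < 1) (hg : ghostValue (lam j) (X 1 j) (X 2 j) = g j) :
    pertOp h lam X i j = discLap h (Function.update X 0 g) i j := by
  have hlower : -1 < lam j := neg_lt_of_abs_lt hlam
  have h₁ : 1 + lam j ≠ 0 := by linarith
  have h₂ : 2 + lam j ≠ 0 := by linarith
  have hne : i ≠ 0 := by omega
  obtain rfl | hi₁ := eq_or_ne i 1
  · simp only [pertOp, if_true, discLap, sub_self, one_add_one_eq_two, Function.update_self,
      Function.update_of_ne hne, Function.update_of_ne (two_ne_zero' ℤ), ← hg, ghostValue]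
    field_simp
    ring
  · have hne' : i + 1 ≠ 0 := by omega
    have hne'' : i - 1 ≠ 0 := by omega
    simp only [pertOp, if_neg hi₁, discLap, Function.update_of_ne hne, Function.update_of_ne hne',
      Function.update_of_ne hne'']

/-- The deformation `l` with `ghostValue l a b = g`, for `x = (a, b, g)` with `g` small. Clearing
denominators, it satisfies `(2 a - b - g) l ^ 2 + (4 a - b - 3 g) l = 2 g`. -/
noncomputable def deformation (x : ℝ × ℝ × ℝ) : ℝ :=
  smallRoot ((2 * x.1 - x.2.1 - x.2.2) / (4 * x.1 - x.2.1 - 3 * x.2.2))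
    (2 * x.2.2 / (4 * x.1 - x.2.1 - 3 * x.2.2))

theorem continuousAt_deformation {x : ℝ × ℝ × ℝ} (hx : 4 * x.1 - x.2.1 - 3 * x.2.2 ≠ 0) :
    ContinuousAt deformation x :=
  continuous_smallRoot.continuousAt.comp
    (f := fun x : ℝ × ℝ × ℝ ↦ ((2 * x.1 - x.2.1 - x.2.2) / (4 * x.1 - x.2.1 - 3 * x.2.2),
      2 * x.2.2 / (4 * x.1 - x.2.1 - 3 * x.2.2)))
    (.prodMk (.div (by fun_prop) (by fun_prop) hx) (.div (by fun_prop) (by fun_prop) hx))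

theorem ghostValue_deformation {a b g : ℝ} (hQ : 4 * a - b - 3 * g ≠ 0)
    (hdisc : 0 ≤ 1 + 4 * ((2 * a - b - g) / (4 * a - b - 3 * g)) * (2 * g / (4 * a - b - 3 * g)))
    (hl : |deformation (a, b, g)| < 1) : ghostValue (deformation (a, b, g)) a b = g := by
  have hroot : (2 * a - b - g) / (4 * a - b - 3 * g) * deformation (a, b, g) ^ 2 +
      deformation (a, b, g) = 2 * g / (4 * a - b - 3 * g) := smallRoot_spec hdisc
  have hlower : -1 < deformation (a, b, g) := neg_lt_of_abs_lt hl
  unfold ghostValue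
  set l := deformation (a, b, g)
  set Q := 4 * a - b - 3 * g with hQdef
  have h₁ : 1 + l ≠ 0 := by linarith
  have h₂ : 2 + l ≠ 0 := by linarith
  field_simp at hroot ⊢
  linear_combination hroot - l * hQdef

/-- At `x = (a, b, g)` the deformation depends continuously on the data, realizes the Dirichlet
control `g` and is smaller than `ε`. -/
def IsRealizable (ε : ℝ) (x : ℝ × ℝ × ℝ) : Prop :=
  ContinuousAt deformation x ∧ ghostValue (deformation x) x.1 x.2.1 = x.2.2 ∧ |deformation x| < ε

theorem eventually_isRealizable {a b : ℝ} (hab : 4 * a - b ≠ 0) {ε : ℝ} (hε : 0 < ε)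
    (hε₁ : ε ≤ 1) : ∀ᶠ x in 𝓝 (a, b, 0), IsRealizable ε x := by
  have hab₀ : 4 * a - b - 3 * 0 ≠ 0 := by simpa using hab
  have hQ : ∀ᶠ x : ℝ × ℝ × ℝ in 𝓝 (a, b, 0), 4 * x.1 - x.2.1 - 3 * x.2.2 ≠ 0 :=
    ContinuousAt.eventually_ne (by fun_prop) hab₀
  have hdisc : ∀ᶠ x : ℝ × ℝ × ℝ in 𝓝 (a, b, 0),
      0 < 1 + 4 * ((2 * x.1 - x.2.1 - x.2.2) / (4 * x.1 - x.2.1 - 3 * x.2.2)) *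
        (2 * x.2.2 / (4 * x.1 - x.2.1 - 3 * x.2.2)) := by
    refine ContinuousAt.eventually_lt continuousAt_const ?_ (by simp)
    fun_prop (disch := exact hab₀)
  have hsmall : ∀ᶠ x in 𝓝 (a, b, 0), |deformation x| < ε :=
    (continuousAt_deformation hab₀).abs.eventually_lt_const (by simpa [deformation, smallRoot])
  filter_upwards [hQ, hdisc, hsmall] with x hxQ hxdisc hxε
  exact ⟨continuousAt_deformation hxQ,
    ghostValue_deformation hxQ hxdisc.le (hxε.trans_le hε₁), hxε⟩

theorem exists_pos_forall_isRealizable {K : Set (ℝ × ℝ)} (hK : IsCompact K)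
    (hne : ∀ p ∈ K, 4 * p.1 - p.2 ≠ 0) {ε : ℝ} (hε : 0 < ε) (hε₁ : ε ≤ 1) :
    ∃ θ > 0, ∀ p ∈ K, ∀ a b g : ℝ, |a| < θ → |b| < θ → |g| < θ →
      IsRealizable ε (p.1 + a, p.2 + b, g) := by
  have hK₀ : IsCompact ((fun p : ℝ × ℝ ↦ (p.1, p.2, (0 : ℝ))) '' K) := hK.image (by fun_prop)
  have hnhds : {x | IsRealizable ε x} ∈ 𝓝ˢ ((fun p : ℝ × ℝ ↦ (p.1, p.2, (0 : ℝ))) '' K) := by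
    rw [mem_nhdsSet_iff_forall, forall_mem_image]
    exact fun p hp ↦ eventually_isRealizable (hne p hp) hε hε₁
  obtain ⟨θ, hθ, hsub⟩ := (Metric.hasBasis_nhdsSet_thickening hK₀).mem_iff.1 hnhds
  refine ⟨θ, hθ, fun p hp a b g ha hb hg ↦ hsub ?_⟩
  refine Metric.mem_thickening_iff.2 ⟨_, mem_image_of_mem _ hp, ?_⟩
  simp [Prod.dist_eq, ha, hb, hg]

end Deformation

section ShapeControl

variable {M N : ℤ} {h : ℝ} {I : Set ℝ} {F y₀ w : ℝ → ℤ → ℤ → ℝ}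

/-- `y` solves the semi-discrete equation `∂_t y + B(t) y = F` on the time set `I`, with homogeneous
Dirichlet data. The operator `B` is `A` for the reference equation and `A(λ)` for the deformed
one. -/
structure IsHeatSolution (M N : ℤ) (B : ℝ → (ℤ → ℤ → ℝ) → ℤ → ℤ → ℝ) (I : Set ℝ)
    (F y : ℝ → ℤ → ℤ → ℝ) : Prop where
  eq_zero : ∀ t ∈ I, ∀ i j, onBoundary M N i j → y t i j = 0
  hasDerivWithinAt : ∀ t ∈ I, ∀ i j, isInterior M N i j →
    HasDerivWithinAt (fun s ↦ y s i j) (F t i j - B t (y t) i j) I t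

theorem IsHeatSolution.continuousOn {B : ℝ → (ℤ → ℤ → ℝ) → ℤ → ℤ → ℝ}
    (hy₀ : IsHeatSolution M N B I F y₀) {i j : ℤ} (hij : onGrid M N i j) :
    ContinuousOn (fun t ↦ y₀ t i j) I := by
  by_cases hint : isInterior M N i j
  · exact fun t ht ↦ (hy₀.hasDerivWithinAt t ht i j hint).continuousWithinAt
  · exact continuousOn_const.congr fun t ht ↦ hy₀.eq_zero t ht i j ⟨hij, hint⟩

/-- Superposition of a reference trajectory `y₀` and a trajectory `w` driven from the edge `i = 0`,
whose values there are discarded: the deformation takes over their effect. -/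
def superpose (y₀ w : ℝ → ℤ → ℤ → ℝ) (t : ℝ) : ℤ → ℤ → ℝ :=
  Function.update (y₀ t + w t) 0 (y₀ t 0)

theorem superpose_of_ne {i : ℤ} (hi : i ≠ 0) (t : ℝ) (j : ℤ) :
    superpose y₀ w t i j = y₀ t i j + w t i j := by
  simp [superpose, hi]

theorem pertOp_superpose {lam : ℤ → ℝ} {t : ℝ} {i j : ℤ} (hi : 1 ≤ i) (hy₀ : y₀ t 0 j = 0)
    (hlam : |lam j| < 1)
    (hghost : ghostValue (lam j) (y₀ t 1 j + w t 1 j) (y₀ t 2 j + w t 2 j) = w t 0 j) :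
    pertOp h lam (superpose y₀ w t) i j = discLap h (y₀ t) i j + discLap h (w t) i j := by
  have hrow (k : ℤ) : Function.update (superpose y₀ w t) 0 (w t 0) k j = y₀ t k j + w t k j := by
    obtain rfl | hk := eq_or_ne k 0
    · rw [Function.update_self, hy₀, zero_add]
    · rw [Function.update_of_ne hk, superpose_of_ne hk]
  have hcol (k : ℤ) : Function.update (superpose y₀ w t) 0 (w t 0) i k = y₀ t i k + w t i k := by
    have hne : i ≠ 0 := by omega
    rw [Function.update_of_ne hne, superpose_of_ne hne]
  rw [← superpose_of_ne one_ne_zero, ← superpose_of_ne two_ne_zero] at hghost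
  rw [pertOp_eq_discLap_update h hi hlam hghost]
  simp only [discLap, hrow, hcol]
  ring

theorem isHeatSolution_superpose (hy₀ : IsHeatSolution M N (fun _ ↦ discLap h) I F y₀)
    (hw : IsBoundaryDriven M N h w) {lam : ℝ → ℤ → ℝ}
    (hlam : ∀ t ∈ I, ∀ j ∈ Icc 1 (N - 1), |lam t j| < 1)
    (hghost : ∀ t ∈ I, ∀ j ∈ Icc 1 (N - 1),
      ghostValue (lam t j) (y₀ t 1 j + w t 1 j) (y₀ t 2 j + w t 2 j) = w t 0 j) :
    IsHeatSolution M N (fun t ↦ pertOp h (lam t)) I F (superpose y₀ w) where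
  eq_zero t ht i j hij := by
    obtain rfl | hi := eq_or_ne i 0
    · simpa only [superpose, Function.update_self] using hy₀.eq_zero t ht 0 j hij
    · rw [superpose_of_ne hi, hy₀.eq_zero t ht i j hij, hw.eq_zero t i j hij hi, add_zero]
  hasDerivWithinAt t ht i j hij := by
    have ⟨hi, hiM, hj⟩ := hij
    have hne : i ≠ 0 := by omega
    have hedge : onBoundary M N 0 j := by
      unfold onBoundary onGrid isInterior
      omega
    simp only [superpose_of_ne hne, pertOp_superpose hi (hy₀.eq_zero t ht 0 j hedge)
      (hlam t ht j hj) (hghost t ht j hj)]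
    exact ((hy₀.hasDerivWithinAt t ht i j hij).add
      (hw.hasDerivAt t i j hij).hasDerivWithinAt).congr_deriv (by ring)

theorem exists_deformation_superpose (hM : 2 ≤ M)
    (hy₀ : IsHeatSolution M N (fun _ ↦ discLap h) I F y₀) (hw : IsBoundaryDriven M N h w)
    {ε : ℝ} (hε : 0 ≤ ε) (hε₁ : ε ≤ 1)
    (hreal : ∀ t ∈ I, ∀ j ∈ Icc 1 (N - 1),
      IsRealizable ε (y₀ t 1 j + w t 1 j, y₀ t 2 j + w t 2 j, w t 0 j)) :
    ∃ lam : ℝ → ℤ → ℝ, (∀ j, ContinuousOn (fun t ↦ lam t j) I) ∧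
      (∀ t ∈ I, ∀ j, |lam t j| ≤ ε) ∧
      IsHeatSolution M N (fun t ↦ pertOp h (lam t)) I F (superpose y₀ w) := by
  classical
  let lam : ℝ → ℤ → ℝ := fun t j ↦ if j ∈ Icc 1 (N - 1) then
    deformation (y₀ t 1 j + w t 1 j, y₀ t 2 j + w t 2 j, w t 0 j) else 0
  have hlam (t) {j} (hj : j ∈ Icc 1 (N - 1)) :
      lam t j = deformation (y₀ t 1 j + w t 1 j, y₀ t 2 j + w t 2 j, w t 0 j) := if_pos hj
  have hlam₀ (t) {j} (hj : j ∉ Icc 1 (N - 1)) : lam t j = 0 := if_neg hj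
  refine ⟨lam, fun j ↦ ?_, fun t ht j ↦ ?_, isHeatSolution_superpose hy₀ hw ?_ ?_⟩
  · by_cases hj : j ∈ Icc 1 (N - 1)
    · have hy (i : ℤ) (hi : 0 ≤ i ∧ i ≤ M) : ContinuousOn (fun t ↦ y₀ t i j) I :=
        hy₀.continuousOn ⟨hi.1, hi.2, by linarith [hj.1], by linarith [hj.2]⟩
      have hwc (i : ℤ) : ContinuousOn (fun t ↦ w t i j) I := (hw.continuous i j).continuousOn
      simp only [hlam _ hj]
      exact fun t ht ↦ (hreal t ht j hj).1.comp_continuousWithinAt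
        (f := fun t ↦ (y₀ t 1 j + w t 1 j, y₀ t 2 j + w t 2 j, w t 0 j))
        (((hy 1 (by omega)).add (hwc 1)).prodMk
          (((hy 2 (by omega)).add (hwc 2)).prodMk (hwc 0)) t ht)
    · simpa only [hlam₀ _ hj] using continuousOn_const
  · by_cases hj : j ∈ Icc 1 (N - 1)
    · exact hlam t hj ▸ (hreal t ht j hj).2.2.le
    · rwa [hlam₀ t hj, abs_zero]
  · exact fun t ht j hj ↦ hlam t hj ▸ (hreal t ht j hj).2.2.trans_le hε₁
  · exact fun t ht j hj ↦ hlam t hj ▸ (hreal t ht j hj).2.1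

theorem IsHeatSolution.isCompact_firstLayers {B : ℝ → (ℤ → ℤ → ℝ) → ℤ → ℤ → ℝ}
    (hy₀ : IsHeatSolution M N B I F y₀) (hM : 2 ≤ M) (hI : IsCompact I) :
    IsCompact (⋃ j ∈ Icc 1 (N - 1), (fun t ↦ (y₀ t 1 j, y₀ t 2 j)) '' I) := by
  refine (finite_Icc _ _).isCompact_biUnion fun j hj ↦ hI.image_of_continuousOn ?_
  have hy (i : ℤ) (hi : 0 ≤ i ∧ i ≤ M) : ContinuousOn (fun t ↦ y₀ t i j) I :=
    hy₀.continuousOn ⟨hi.1, hi.2, by linarith [hj.1], by linarith [hj.2]⟩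
  exact (hy 1 (by omega)).prodMk (hy 2 (by omega))

end ShapeControl

theorem stmt13_general {M N : ℤ} (hM : 2 ≤ M) {h : ℝ} (hh : h ≠ 0) {T : ℝ} (hT : 0 < T)
    {F y₀ : ℝ → ℤ → ℤ → ℝ} (hy₀ : IsHeatSolution M N (fun _ ↦ discLap h) (Icc 0 T) F y₀)
    (hnd : ∀ t ∈ Icc (0 : ℝ) T, ∀ j : ℤ, 1 ≤ j → j ≤ N - 1 →
      (1 / 2) * y₀ t 2 j - 2 * y₀ t 1 j ≠ 0)
    {ε : ℝ} (hε : 0 < ε) :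
    ∃ δ > (0 : ℝ),
      ∀ Z : ℤ → ℤ → ℝ, (∀ i j, isInterior M N i j → |Z i j - y₀ T i j| < δ) →
        ∃ lam : ℝ → ℤ → ℝ,
          (∀ j, ContinuousOn (fun t ↦ lam t j) (Icc (0 : ℝ) T)) ∧
          (∀ t ∈ Icc (0 : ℝ) T, ∀ j, |lam t j| ≤ ε) ∧
          ∃ u, IsHeatSolution M N (fun t ↦ pertOp h (lam t)) (Icc 0 T) F u ∧ u 0 = y₀ 0 ∧
            ∀ i j, isInterior M N i j → u T i j = Z i j := by
  have hε' : 0 < min ε 1 := lt_min hε one_pos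
  obtain ⟨θ, hθ, hreal⟩ := exists_pos_forall_isRealizable
    (hy₀.isCompact_firstLayers hM isCompact_Icc) (ε := min ε 1) (by
      simp only [mem_iUnion, mem_image]
      rintro _ ⟨j, hj, t, ht, rfl⟩ hzero
      exact hnd t ht j hj.1 hj.2 (by linear_combination -hzero / 2)) hε' (min_le_right _ _)
  obtain ⟨C, hC⟩ := exists_isBoundaryDriven M N hh hT
  obtain ⟨δ, hδ, hCδ⟩ := exists_pos_mul_lt hθ C
  refine ⟨δ, hδ, fun Z hZ ↦ ?_⟩
  obtain ⟨w, hw, hw₀, hwT, hwC⟩ := hC δ hδ.le _ fun i j hij ↦ (hZ i j hij).le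
  have hwθ (t) (ht : t ∈ Icc 0 T) (i : ℤ) (hi : 0 ≤ i) (j : ℤ) : |w t i j| < θ :=
    (hwC t ht i hi j).trans_lt hCδ
  obtain ⟨lam, hlam, hlamε, hu⟩ := exists_deformation_superpose hM hy₀ hw hε'.le
    (min_le_right _ _) fun t ht j hj ↦ hreal (y₀ t 1 j, y₀ t 2 j)
      (mem_biUnion hj (mem_image_of_mem _ ht)) _ _ _ (hwθ t ht 1 (by norm_num) j)
      (hwθ t ht 2 (by norm_num) j) (hwθ t ht 0 le_rfl j)
  refine ⟨lam, hlam, fun t ht j ↦ (hlamε t ht j).trans (min_le_left _ _), superpose y₀ w, hu, ?_,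
    fun i j hij ↦ ?_⟩
  · simp [superpose, hw₀]
  · rw [superpose_of_ne (by have := hij.1; omega), hwT i j hij, add_sub_cancel]

/-- local exact controllability of the semi-discrete heat equation by the
shape of the domain. If the reference solution `y₀` of `∂_t y₀ + A y₀ = F`, `y₀(0) = u₀`
satisfies the discrete non-degeneracy condition, then every family of interior values `Z`
sufficiently close to `y₀(T)` is reached at time `T` by the solution of the perturbed
equation `∂_t u + A(λ(t)) u = F`, `u(0) = u₀`, for some small continuous deformation `λ`. -/
theorem stmt13 (M N : ℤ) (hM : 3 ≤ M) (hN : 3 ≤ N) (h : ℝ) (hh : 0 < h)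
    (T : ℝ) (hT : 0 < T)
    (F : ℝ → ℤ → ℤ → ℝ)
    (hF : ∀ i j, isInterior M N i j → ContinuousOn (fun t => F t i j) (Icc (0 : ℝ) T))
    (u₀ : ℤ → ℤ → ℝ) (hu₀ : ∀ i j, onBoundary M N i j → u₀ i j = 0)
    (y₀ : ℝ → ℤ → ℤ → ℝ)
    (hy₀bd : ∀ t ∈ Icc (0 : ℝ) T, ∀ i j, onBoundary M N i j → y₀ t i j = 0)
    (hy₀ode : ∀ t ∈ Icc (0 : ℝ) T, ∀ i j, isInterior M N i j →
      HasDerivWithinAt (fun s => y₀ s i j) (F t i j - discLap h (y₀ t) i j)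
        (Icc (0 : ℝ) T) t)
    (hy₀init : y₀ 0 = u₀)
    (hnd : ∀ t ∈ Icc (0 : ℝ) T, ∀ j : ℤ, 1 ≤ j → j ≤ N - 1 →
      (1 / 2) * y₀ t 2 j - 2 * y₀ t 1 j ≠ 0) :
    ∃ ε ∈ Ioo (0 : ℝ) (1 / 2), ∃ δ > (0 : ℝ),
      ∀ Z : ℤ → ℤ → ℝ, (∀ i j, isInterior M N i j → |Z i j - y₀ T i j| < δ) →
        ∃ lam : ℝ → ℤ → ℝ,
          (∀ j, ContinuousOn (fun t => lam t j) (Icc (0 : ℝ) T)) ∧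
          (∀ t ∈ Icc (0 : ℝ) T, ∀ j, |lam t j| ≤ ε) ∧
          ∃ u : ℝ → ℤ → ℤ → ℝ,
            (∀ t ∈ Icc (0 : ℝ) T, ∀ i j, onBoundary M N i j → u t i j = 0) ∧
            (∀ t ∈ Icc (0 : ℝ) T, ∀ i j, isInterior M N i j →
              HasDerivWithinAt (fun s => u s i j)
                (F t i j - pertOp h (lam t) (u t) i j) (Icc (0 : ℝ) T) t) ∧
            u 0 = u₀ ∧
            (∀ i j, isInterior M N i j → u T i j = Z i j) := by
  obtain ⟨δ, hδ, hcontrol⟩ := stmt13_general (ε := 1 / 4) (by omega) hh.ne' hT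
    ⟨hy₀bd, hy₀ode⟩ hnd (by norm_num)
  refine ⟨1 / 4, by norm_num, δ, hδ, fun Z hZ ↦ ?_⟩
  obtain ⟨lam, hlam, hlamε, u, ⟨hubd, huode⟩, hu₀', huT⟩ := hcontrol Z hZ
  exact ⟨lam, hlam, hlamε, u, hubd, huode, hu₀'.trans hy₀init, huT⟩
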